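/- Under hypotheses H(M), H(F), H(G), H(γ), H(Ψ), E ∈ X*, the smallness condition c_F > c_G‖γ‖^p, and assuming additionally that F is strictly monotone (so that the solution map S of Problem 2 is single-valued), the graph of the map Q(z,ξ) = {S(z,ξ)} × G(γz) is sequentially weakly closed in the following sense: if z_n, x_n ∈ K ∩ D(L) and ξ_n, η_n ∈ Y* satisfy x_n = S(z_n, ξ_n), η_n ∈ G(γz_n), z_n ⇀ z weakly in W, x_n ⇀ x weakly in W, ξ_n ⇀ ξ weakly in Y* and η_n ⇀ η weakly in Y*, then x = S(z, ξ) and η ∈ G(γz). -/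

import Mathlib

open Filter Topology Bornology Set

noncomputable section

/-- Weak convergence of a sequence in a normed space: convergence tested
against every continuous linear functional. -/
def WeakConv {V : Type*} [NormedAddCommGroup V] [NormedSpace ℝ V]
    (x : ℕ → V) (x₀ : V) : Prop :=
  ∀ f : V →L[ℝ] ℝ, Tendsto (fun n => f (x n)) atTop (𝓝 (f x₀))

/-- Weak-star convergence of a sequence of continuous linear functionals
(which coincides with weak convergence when the underlying space is reflexive). -/
def WeakStarConv {V : Type*} [NormedAddCommGroup V] [NormedSpace ℝ V]
    (f : ℕ → V →L[ℝ] ℝ) (f₀ : V →L[ℝ] ℝ) : Prop :=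
  ∀ v : V, Tendsto (fun n => f n v) atTop (𝓝 (f₀ v))

/-- Reflexivity of a real normed space, expressed via surjectivity of the
canonical embedding into the double dual. -/
def IsReflexiveSpace (V : Type*) [NormedAddCommGroup V] [NormedSpace ℝ V] : Prop :=
  Function.Surjective ⇑(NormedSpace.inclusionInDoubleDual ℝ V)

/-- Clarke generalized directional derivative of `J` at `u` in direction `v`. -/
def clarkeDD {V : Type*} [NormedAddCommGroup V] [NormedSpace ℝ V]
    (J : V → ℝ) (u v : V) : ℝ :=
  limsup (fun q : V × ℝ => (J (q.1 + q.2 • v) - J q.1) / q.2)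
    ((𝓝 u) ×ˢ (𝓝[>] (0 : ℝ)))

/-- Clarke generalized subdifferential of `J` at `u`. -/
def clarkeSub {V : Type*} [NormedAddCommGroup V] [NormedSpace ℝ V]
    (J : V → ℝ) (u : V) : Set (V →L[ℝ] ℝ) :=
  {g | ∀ v : V, g v ≤ clarkeDD J u v}

/-- The data of the evolution multivalued quasi-variational inequality:
spaces `X`, `Y`, the (unbounded) operator `L` with domain `DL`, the constraint
set `K`, the constraint map `M`, the operator `F`, the multivalued map `G`,
the trace operator `gam`, the bifunction `Psi`, the right-hand side `E`, and
the constants appearing in the hypotheses. -/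
structure QVISetting (X Y : Type*) [NormedAddCommGroup X] [NormedSpace ℝ X]
    [NormedAddCommGroup Y] [NormedSpace ℝ Y] where
  DL : Set X
  L : X → X →L[ℝ] ℝ
  K : Set X
  M : X → Set X
  F : X → X →L[ℝ] ℝ
  G : Y → Set (Y →L[ℝ] ℝ)
  gam : X →L[ℝ] Y
  Psi : X → X → ℝ
  E : X →L[ℝ] ℝ
  p : ℝ
  cF : ℝ
  dF : ℝ
  cG : ℝ
  dG : ℝ
  cPsi : ℝ
  dPsi : ℝ
  ePsi : ℝ
  beta : ℝ

namespace QVISetting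

variable {X Y : Type*} [NormedAddCommGroup X] [NormedSpace ℝ X]
  [NormedAddCommGroup Y] [NormedSpace ℝ Y] (S : QVISetting X Y)

/-- Weak convergence in `W = D(L)` equipped with the graph norm:
weak convergence in `X` together with weak convergence of `L xₙ` in `X*`. -/
def WConvW (x : ℕ → X) (x₀ : X) : Prop :=
  WeakConv x x₀ ∧ WeakStarConv (fun n => S.L (x n)) (S.L x₀)

/-- H(L): `L` is linear on its domain `DL`, densely defined, monotone, and
maximal monotone. -/
def HL : Prop :=
  (0 : X) ∈ S.DL ∧
  (∀ a ∈ S.DL, ∀ b ∈ S.DL, ∀ s t : ℝ,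
      s • a + t • b ∈ S.DL ∧ S.L (s • a + t • b) = s • S.L a + t • S.L b) ∧
  Dense S.DL ∧
  (∀ u ∈ S.DL, ∀ v ∈ S.DL, 0 ≤ (S.L u - S.L v) (u - v)) ∧
  (∀ (x : X) (xs : X →L[ℝ] ℝ),
      (∀ v ∈ S.DL, 0 ≤ (xs - S.L v) (x - v)) → x ∈ S.DL ∧ xs = S.L x)

/-- H(K): `K` is nonempty, closed and convex. -/
def HK : Prop := S.K.Nonempty ∧ IsClosed S.K ∧ Convex ℝ S.K

/-- H(M): `M` has nonempty closed convex values contained in `K`; `0` lies in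
the norm-interior of `⋂_{w ∈ K} M w`; `M` has a weakly closed graph with
respect to `L`; and the Mosco-type approximation property holds. -/
def HM : Prop :=
  (∀ z ∈ S.K, (S.M z).Nonempty ∧ IsClosed (S.M z) ∧ Convex ℝ (S.M z) ∧ S.M z ⊆ S.K) ∧
  (0 : X) ∈ interior (⋂ w ∈ S.K, S.M w) ∧
  (∀ (y x : ℕ → X) (y₀ x₀ : X), (∀ n, y n ∈ S.K) →
      (∀ n, x n ∈ S.M (y n) ∩ S.DL) →
      S.WConvW y y₀ → S.WConvW x x₀ → x₀ ∈ S.M y₀ ∩ S.DL) ∧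
  (∀ (y : ℕ → X) (y₀ : X), (∀ n, y n ∈ S.K) → S.WConvW y y₀ →
      ∀ x₀ ∈ S.M y₀ ∩ S.DL, ∃ x : ℕ → X,
        (∀ n, x n ∈ S.M (y n) ∩ S.DL) ∧ Tendsto x atTop (𝓝 x₀))

/-- H(F): `F` is bounded, monotone, hemicontinuous and `p`-coercive. -/
def HF : Prop :=
  (∀ B : Set X, IsBounded B → IsBounded (S.F '' B)) ∧
  (∀ u v : X, 0 ≤ (S.F u - S.F v) (u - v)) ∧
  (∀ u v w : X, Tendsto (fun t : ℝ => S.F (u + t • v) w) (𝓝 0) (𝓝 (S.F u w))) ∧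
  1 < S.p ∧ 0 < S.cF ∧ 0 ≤ S.dF ∧
  (∀ x : X, S.cF * ‖x‖ ^ S.p - S.dF ≤ S.F x x)

/-- H(G): `G` has nonempty closed convex values, sequentially strongly–weakly
closed graph, and satisfies the `(p-1)`-growth condition. -/
def HG : Prop :=
  (∀ z : Y, (S.G z).Nonempty ∧ IsClosed (S.G z) ∧ Convex ℝ (S.G z)) ∧
  (∀ (z : ℕ → Y) (z₀ : Y) (ξ : ℕ → Y →L[ℝ] ℝ) (ξ₀ : Y →L[ℝ] ℝ),
      Tendsto z atTop (𝓝 z₀) → (∀ n, ξ n ∈ S.G (z n)) →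
      WeakStarConv ξ ξ₀ → ξ₀ ∈ S.G z₀) ∧
  0 ≤ S.cG ∧ 0 ≤ S.dG ∧
  (∀ z : Y, ∀ ξ ∈ S.G z, ‖ξ‖ ≤ S.cG * ‖z‖ ^ (S.p - 1) + S.dG)

/-- H(γ): `gam` is compact on `W`: it maps weakly convergent sequences in `W`
to strongly convergent sequences in `Y`. -/
def Hgam : Prop :=
  ∀ (x : ℕ → X) (x₀ : X), S.WConvW x x₀ →
    Tendsto (fun n => S.gam (x n)) atTop (𝓝 (S.gam x₀))

/-- H(Ψ): conditions (i)–(iv) on the bifunction `Psi`. -/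
def HPsi : Prop :=
  (∀ x : X, ConvexOn ℝ Set.univ (S.Psi x) ∧ LowerSemicontinuous (S.Psi x)) ∧
  (∃ (η : ℝ) (b : X → X → X → ℝ), 0 < η ∧ η < S.p ∧
    (∀ a u v : X, 0 ≤ b a u v) ∧
    (∀ A B C : Set X, IsBounded A → IsBounded B → IsBounded C →
        ∃ Cb : ℝ, ∀ a ∈ A, ∀ u ∈ B, ∀ v ∈ C, b a u v ≤ Cb) ∧
    (∀ x y₁ y₂ : X, S.Psi x y₁ - S.Psi x y₂ ≤ b x y₁ y₂ * ‖y₁ - y₂‖ ^ η) ∧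
    (∀ B : Set X, IsBounded B → ∀ ε > (0 : ℝ), ∃ R : ℝ, ∀ z ∈ B, ∀ x : X,
        R ≤ ‖x‖ → b z 0 x / ‖x‖ ^ (S.p - η) ≤ ε)) ∧
  (∀ (w x y : ℕ → X) (w₀ x₀ y₀ : X),
      S.WConvW w w₀ → S.WConvW x x₀ → Tendsto y atTop (𝓝 y₀) →
      limsup (fun n => S.Psi (w n) (y n) - S.Psi (w n) (x n)) atTop ≤
        S.Psi w₀ y₀ - S.Psi w₀ x₀) ∧
  (∀ v : X, ∃ g : X →L[ℝ] ℝ, ∀ y : X, S.Psi v 0 + g y ≤ S.Psi v y) ∧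
  (0 ≤ S.ePsi ∧ ∀ v : X, |S.Psi v 0| ≤ S.ePsi) ∧
  (0 ≤ S.cPsi ∧ 0 ≤ S.dPsi ∧ 1 ≤ S.beta ∧ S.beta < S.p ∧
    ∀ v y : X, -S.cPsi * ‖y‖ ^ S.beta - S.dPsi ≤ S.Psi v y)

/-- The `(S₊)`-property of `F` with respect to `L`. -/
def SPlus : Prop :=
  ∀ (x : ℕ → X) (x₀ : X), S.WConvW x x₀ →
    limsup (fun n => S.F (x n) (x n - x₀)) atTop ≤ 0 →
    Tendsto x atTop (𝓝 x₀)

/-- Strict monotonicity of `F`. -/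
def StrictlyMonotoneF : Prop :=
  ∀ u v : X, u ≠ v → 0 < (S.F u - S.F v) (u - v)

/-- Solution set of Problem 1. -/
def Sol1 : Set X :=
  {x | x ∈ S.M x ∩ S.DL ∧ ∃ ξ ∈ S.G (S.gam x), ∀ y ∈ S.M x ∩ S.DL,
      S.Psi x x - S.Psi x y ≤
        S.L x (y - x) + S.F x (y - x) - S.E (y - x) + ξ (S.gam (y - x))}

/-- Solution set of Problem 2 with parameters `(z, ξ)`. -/
def Sol2 (z : X) (ξ : Y →L[ℝ] ℝ) : Set X :=
  {x | x ∈ S.M z ∩ S.DL ∧ ∀ y ∈ S.M z ∩ S.DL,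
      S.Psi z x - S.Psi z y ≤
        S.L x (y - x) + S.F x (y - x) - S.E (y - x) + ξ (S.gam (y - x))}

/-- Solution set of Problem 3 (with `G = ∂_C J ∘ γ`). -/
def Sol3 (J : Y → ℝ) : Set X :=
  {x | x ∈ S.M x ∩ S.DL ∧ ∃ ξ ∈ clarkeSub J (S.gam x), ∀ y ∈ S.M x ∩ S.DL,
      S.Psi x x - S.Psi x y ≤
        S.L x (y - x) + S.F x (y - x) - S.E (y - x) + ξ (S.gam (y - x))}

/-- Solution set of Problem 4 (quasi-variational–hemivariational inequality). -/
def Sol4 (J : Y → ℝ) : Set X :=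
  {x | x ∈ S.M x ∩ S.DL ∧ ∀ y ∈ S.M x ∩ S.DL,
      S.Psi x x - S.Psi x y ≤
        S.L x (y - x) + S.F x (y - x) - S.E (y - x) +
          clarkeDD J (S.gam x) (S.gam (y - x))}

/-- Solution set of Problem 5 with a real-valued convex function `Φ`
independent of the first variable. -/
def Sol5 (Φ : X → ℝ) : Set X :=
  {x | x ∈ S.M x ∩ S.DL ∧ ∃ ξ ∈ S.G (S.gam x), ∀ y ∈ S.M x ∩ S.DL,
      Φ x - Φ y ≤
        S.L x (y - x) + S.F x (y - x) - S.E (y - x) + ξ (S.gam (y - x))}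

/-- Solution set of Problem 5 with an extended-real-valued function `Φ`. -/
def Sol5E (Φ : X → EReal) : Set X :=
  {x | x ∈ S.M x ∩ S.DL ∧ ∃ ξ ∈ S.G (S.gam x), ∀ y ∈ S.M x ∩ S.DL,
      Φ x ≤
        ((S.L x (y - x) + S.F x (y - x) - S.E (y - x) + ξ (S.gam (y - x)) : ℝ) : EReal)
          + Φ y}

/-- Sequential weak compactness of a set in `W`. -/
def SeqWeakCompactW (A : Set X) : Prop :=
  ∀ x : ℕ → X, (∀ n, x n ∈ A) →
    ∃ x₀ ∈ A, ∃ φ : ℕ → ℕ, StrictMono φ ∧ S.WConvW (x ∘ φ) x₀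

end QVISetting

/-!
The limit of the inequalities solved by `x n` cannot be taken directly, since `F (x n)` need not
converge and `L (x n) (x n)` pairs two merely weakly convergent sequences. Monotonicity trades
`F (x n) (w n - x n)` for `F y (y - x n)` and `L (x n) (w n - x n)` for `L x₀ (x₀ - x n)`, up to
pairings of bounded functionals with strongly convergent sequences, where the `w n ∈ M (z n)`
converge strongly to the test point `y ∈ M z₀`. The limit is the Minty form of Problem 2, in which
`F` is evaluated at the test point. Testing with `x₀ + t • (y - x₀)`, dividing by `t` and letting
`t → 0⁺` returns `F` to `x₀`.
-/

theorem tendsto_apply_zero_of_isBounded_range {ι 𝕜 V W : Type*} [NontriviallyNormedField 𝕜]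
    [SeminormedAddCommGroup V] [NormedSpace 𝕜 V] [SeminormedAddCommGroup W] [NormedSpace 𝕜 W]
    {l : Filter ι} {f : ι → V →L[𝕜] W} {v : ι → V} (hf : IsBounded (range f))
    (hv : Tendsto v l (𝓝 0)) : Tendsto (fun i => f i (v i)) l (𝓝 0) := by
  obtain ⟨C, hC⟩ := hf.exists_norm_le
  refine squeeze_zero_norm (fun i => (f i).le_of_opNorm_le (hC _ (mem_range_self i)) (v i)) ?_
  simpa only [norm_zero, mul_zero] using hv.norm.const_mul C

section WeakConvergence

variable {V : Type*} [NormedAddCommGroup V] [NormedSpace ℝ V]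

theorem WeakStarConv.isBounded_range [CompleteSpace V] {f : ℕ → V →L[ℝ] ℝ} {f₀ : V →L[ℝ] ℝ}
    (hf : WeakStarConv f f₀) : IsBounded (range f) := by
  have pointwise_bound (v : V) : ∃ C, ∀ n, ‖f n v‖ ≤ C := by
    simpa only [forall_mem_range] using
      (Metric.isBounded_range_of_tendsto _ (hf v)).exists_norm_le
  obtain ⟨C, hC⟩ := banach_steinhaus pointwise_bound
  exact isBounded_iff_forall_norm_le.2 ⟨C, forall_mem_range.2 hC⟩

theorem WeakStarConv.tendsto_apply [CompleteSpace V] {f : ℕ → V →L[ℝ] ℝ} {f₀ : V →L[ℝ] ℝ}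
    (hf : WeakStarConv f f₀) {v : ℕ → V} {v₀ : V} (hv : Tendsto v atTop (𝓝 v₀)) :
    Tendsto (fun n => f n (v n)) atTop (𝓝 (f₀ v₀)) := by
  have hdiff : Tendsto (fun n => f n (v n - v₀)) atTop (𝓝 0) :=
    tendsto_apply_zero_of_isBounded_range hf.isBounded_range (tendsto_sub_nhds_zero_iff.2 hv)
  simpa only [map_sub, sub_add_cancel, zero_add] using hdiff.add (hf v₀)

theorem weakConv_of_tendsto {x : ℕ → V} {x₀ : V} (hx : Tendsto x atTop (𝓝 x₀)) :
    WeakConv x x₀ :=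
  fun f => (f.continuous.tendsto x₀).comp hx

theorem WeakConv.sub {x y : ℕ → V} {x₀ y₀ : V} (hx : WeakConv x x₀) (hy : WeakConv y y₀) :
    WeakConv (fun n => x n - y n) (x₀ - y₀) := fun f => by
  simpa only [map_sub] using (hx f).sub (hy f)

theorem WeakConv.isBounded_range {x : ℕ → V} {x₀ : V} (hx : WeakConv x x₀) :
    IsBounded (range x) := by
  have hbidual : WeakStarConv (fun n => NormedSpace.inclusionInDoubleDual ℝ V (x n))
      (NormedSpace.inclusionInDoubleDual ℝ V x₀) := hx
  obtain ⟨C, hC⟩ := hbidual.isBounded_range.exists_norm_le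
  refine isBounded_iff_forall_norm_le.2 ⟨C, forall_mem_range.2 fun n => ?_⟩
  exact ((NormedSpace.inclusionInDoubleDualLi ℝ).norm_map (x n)).symm.trans_le
    (hC _ (mem_range_self n))

theorem WeakConv.mem_of_isClosed_of_convex {C : Set V} (hclosed : IsClosed C)
    (hconvex : Convex ℝ C) {x : ℕ → V} {x₀ : V} (hx : WeakConv x x₀) (hmem : ∀ n, x n ∈ C) :
    x₀ ∈ C := by
  by_contra hx₀
  obtain ⟨f, u, hlt, hgt⟩ := geometric_hahn_banach_point_closed hconvex hclosed hx₀
  exact (ge_of_tendsto' (hx f) fun n => (hgt _ (hmem n)).le).not_gt hlt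

end WeakConvergence

theorem apply_sub_le_of_sub_apply_nonneg {V R : Type*} [AddCommGroup V] [AddCommGroup R]
    [PartialOrder R] [IsOrderedAddMonoid R] {f g : V →+ R} {x y : V}
    (h : 0 ≤ (f - g) (x - y)) (w : V) : f (w - x) ≤ f (w - y) + g (y - x) := by
  have hfg : f (y - x) ≤ g (y - x) := by
    rw [← neg_sub x y, map_neg, map_neg]
    exact neg_le_neg (sub_nonneg.1 h)
  rw [← sub_add_sub_cancel w y x, map_add]
  gcongr

theorem sub_le_apply_of_minty {V : Type*} [AddCommGroup V] [Module ℝ V] {C : Set V}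
    {φ : V → ℝ} {A : V → V →ₗ[ℝ] ℝ} {x y : V} (hφ : ConvexOn ℝ C φ) (hx : x ∈ C) (hy : y ∈ C)
    (hA : Tendsto (fun t : ℝ => A (x + t • (y - x)) (y - x)) (𝓝[>] 0) (𝓝 (A x (y - x))))
    (hminty : ∀ u ∈ C, φ x - φ u ≤ A u (u - x)) : φ x - φ y ≤ A x (y - x) := by
  refine ge_of_tendsto hA ?_
  filter_upwards [Ioc_mem_nhdsGT (zero_lt_one' ℝ)] with t ht
  have hmem : x + t • (y - x) ∈ C :=
    hφ.1.add_smul_sub_mem hx hy (Ioc_subset_Icc_self ht)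
  have hφt : φ (x + t • (y - x)) ≤ (1 - t) * φ x + t * φ y := by
    have hcomb : x + t • (y - x) = (1 - t) • x + t • y := by module
    simpa only [hcomb, smul_eq_mul] using
      hφ.2 hx hy (sub_nonneg.2 ht.2) ht.1.le (sub_add_cancel 1 t)
  have htest := hminty _ hmem
  rw [add_sub_cancel_left, map_smul, smul_eq_mul] at htest
  exact le_of_mul_le_mul_left (by linarith) ht.1

namespace QVISetting

variable {X Y : Type*} [NormedAddCommGroup X] [NormedSpace ℝ X]
  [NormedAddCommGroup Y] [NormedSpace ℝ Y] {S : QVISetting X Y}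

theorem HL.convex_domain (hL : S.HL) : Convex ℝ S.DL :=
  fun a ha b hb s t _ _ _ => (hL.2.1 a ha b hb s t).1

theorem HPsi.exists_psi_sub_le (hPsi : S.HPsi) {A B C : Set X} (hA : IsBounded A)
    (hB : IsBounded B) (hC : IsBounded C) :
    ∃ c, ∀ a ∈ A, ∀ u ∈ B, ∀ v ∈ C, S.Psi a u - S.Psi a v ≤ c := by
  obtain ⟨-, ⟨η, b, hη, -, -, hb, hholder, -⟩, -⟩ := hPsi
  obtain ⟨c, hc⟩ := hb A B C hA hB hC
  obtain ⟨RB, hRB⟩ := hB.exists_norm_le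
  obtain ⟨RC, hRC⟩ := hC.exists_norm_le
  refine ⟨|c| * (RB + RC) ^ η, fun a ha u hu v hv => (hholder a u v).trans ?_⟩
  have hdist : ‖u - v‖ ≤ RB + RC := (norm_sub_le u v).trans (add_le_add (hRB u hu) (hRC v hv))
  gcongr
  exact (hc a ha u hu v hv).trans (le_abs_self c)

theorem psi_sub_le_of_tendsto
    (hbdd : ∀ A B C : Set X, IsBounded A → IsBounded B → IsBounded C →
      ∃ c, ∀ a ∈ A, ∀ u ∈ B, ∀ v ∈ C, S.Psi a u - S.Psi a v ≤ c)
    (hlimsup : ∀ (w x y : ℕ → X) (w₀ x₀ y₀ : X),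
      S.WConvW w w₀ → S.WConvW x x₀ → Tendsto y atTop (𝓝 y₀) →
      limsup (fun n => S.Psi (w n) (y n) - S.Psi (w n) (x n)) atTop ≤
        S.Psi w₀ y₀ - S.Psi w₀ x₀)
    {z x w : ℕ → X} {z₀ x₀ y : X} (hz : S.WConvW z z₀) (hx : S.WConvW x x₀)
    (hw : Tendsto w atTop (𝓝 y)) {a : ℕ → ℝ} {a₀ : ℝ} (ha : Tendsto a atTop (𝓝 a₀))
    (hle : ∀ n, S.Psi (z n) (x n) - S.Psi (z n) (w n) ≤ a n) :
    S.Psi z₀ x₀ - S.Psi z₀ y ≤ a₀ := by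
  obtain ⟨c, hc⟩ := hbdd _ _ _ hz.1.isBounded_range (Metric.isBounded_range_of_tendsto w hw)
    hx.1.isBounded_range
  -- Without this bound the real `limsup` in `hlimsup` could be a junk value.
  have hbounded : IsBoundedUnder (· ≤ ·) atTop
      fun n => S.Psi (z n) (w n) - S.Psi (z n) (x n) :=
    isBoundedUnder_of ⟨c, fun n => hc _ ⟨n, rfl⟩ _ ⟨n, rfl⟩ _ ⟨n, rfl⟩⟩
  have hneg : -a₀ ≤ S.Psi z₀ y - S.Psi z₀ x₀ := calc
    -a₀ = limsup (fun n => -a n) atTop := ha.neg.limsup_eq.symm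
    _ ≤ limsup (fun n => S.Psi (z n) (w n) - S.Psi (z n) (x n)) atTop :=
      limsup_le_limsup (Eventually.of_forall fun n => by linarith [hle n])
        ha.neg.isCoboundedUnder_le hbounded
    _ ≤ S.Psi z₀ y - S.Psi z₀ x₀ := hlimsup z x w z₀ x₀ y hz hx hw
  linarith

theorem psi_sub_le_of_mem_sol2 {z x w : X} {ξ : Y →L[ℝ] ℝ} (hx : x ∈ S.Sol2 z ξ)
    (hw : w ∈ S.M z ∩ S.DL) {u y : X} (hL : 0 ≤ (S.L x - S.L u) (x - u))
    (hF : 0 ≤ (S.F x - S.F y) (x - y)) :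
    S.Psi z x - S.Psi z w ≤ (S.L x (w - u) + S.L u (u - x)) +
      (S.F x (w - y) + S.F y (y - x)) - S.E (w - x) + ξ (S.gam (w - x)) := by
  have hLx : S.L x (w - x) ≤ S.L x (w - u) + S.L u (u - x) :=
    apply_sub_le_of_sub_apply_nonneg (f := (S.L x : X →+ ℝ)) (g := (S.L u : X →+ ℝ)) hL w
  have hFx : S.F x (w - x) ≤ S.F x (w - y) + S.F y (y - x) :=
    apply_sub_le_of_sub_apply_nonneg (f := (S.F x : X →+ ℝ)) (g := (S.F y : X →+ ℝ)) hF w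
  linarith [hx.2 w hw]

theorem WConvW.tendsto_minty_bound [CompleteSpace X] [CompleteSpace Y] (hgam : S.Hgam)
    {x w : ℕ → X} {x₀ y : X} {ξ : ℕ → Y →L[ℝ] ℝ} {ξ₀ : Y →L[ℝ] ℝ} (hx : S.WConvW x x₀)
    (hF : IsBounded (range fun n => S.F (x n))) (hw : Tendsto w atTop (𝓝 y))
    (hξ : WeakStarConv ξ ξ₀) :
    Tendsto (fun n => (S.L (x n) (w n - x₀) + S.L x₀ (x₀ - x n)) +
        (S.F (x n) (w n - y) + S.F y (y - x n)) - S.E (w n - x n) + ξ n (S.gam (w n - x n)))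
      atTop
      (𝓝 (S.L x₀ (y - x₀) + S.F y (y - x₀) - S.E (y - x₀) + ξ₀ (S.gam (y - x₀)))) := by
  have hsub (u : X) : WeakConv (fun n => u - x n) (u - x₀) :=
    (weakConv_of_tendsto tendsto_const_nhds).sub hx.1
  have hLlim : Tendsto (fun n => S.L (x n) (w n - x₀) + S.L x₀ (x₀ - x n)) atTop
      (𝓝 (S.L x₀ (y - x₀))) := by
    simpa only [sub_self, map_zero, add_zero] using
      (hx.2.tendsto_apply (hw.sub_const x₀)).add (hsub x₀ (S.L x₀))
  have hFlim : Tendsto (fun n => S.F (x n) (w n - y) + S.F y (y - x n)) atTop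
      (𝓝 (S.F y (y - x₀))) := by
    simpa only [zero_add] using (tendsto_apply_zero_of_isBounded_range hF
      (tendsto_sub_nhds_zero_iff.2 hw)).add (hsub y (S.F y))
  have hElim : Tendsto (fun n => S.E (w n - x n)) atTop (𝓝 (S.E (y - x₀))) :=
    (weakConv_of_tendsto hw).sub hx.1 S.E
  have hγlim : Tendsto (fun n => S.gam (w n - x n)) atTop (𝓝 (S.gam (y - x₀))) := by
    simpa only [map_sub, Function.comp_apply] using
      ((S.gam.continuous.tendsto y).comp hw).sub (hgam x x₀ hx)
  exact ((hLlim.add hFlim).sub hElim).add (hξ.tendsto_apply hγlim)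

theorem mem_sol2_of_minty {z x : X} {ξ : Y →L[ℝ] ℝ}
    (hPsi : ConvexOn ℝ (S.M z ∩ S.DL) (S.Psi z))
    (hF : ∀ v : X, Tendsto (fun t : ℝ => S.F (x + t • v) v) (𝓝[>] 0) (𝓝 (S.F x v)))
    (hx : x ∈ S.M z ∩ S.DL)
    (hminty : ∀ y ∈ S.M z ∩ S.DL, S.Psi z x - S.Psi z y ≤
      S.L x (y - x) + S.F y (y - x) - S.E (y - x) + ξ (S.gam (y - x))) :
    x ∈ S.Sol2 z ξ := by
  let A (u : X) : X →ₗ[ℝ] ℝ := ↑(S.L x + S.F u - S.E + ξ.comp S.gam)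
  refine ⟨hx, fun y hy => sub_le_apply_of_minty (A := A) hPsi hx hy ?_ hminty⟩
  exact (((hF (y - x)).const_add _).sub_const _).add_const _

end QVISetting

theorem statement6_general {X Y : Type*} [NormedAddCommGroup X] [NormedSpace ℝ X]
    [NormedAddCommGroup Y] [NormedSpace ℝ Y] [CompleteSpace X] [CompleteSpace Y]
    (S : QVISetting X Y) (hKclosed : IsClosed S.K) (hKconvex : Convex ℝ S.K)
    (hDL : Convex ℝ S.DL)
    (hLmono : ∀ u ∈ S.DL, ∀ v ∈ S.DL, 0 ≤ (S.L u - S.L v) (u - v))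
    (hMconvex : ∀ z ∈ S.K, Convex ℝ (S.M z))
    (hMgraph : ∀ (y x : ℕ → X) (y₀ x₀ : X), (∀ n, y n ∈ S.K) →
      (∀ n, x n ∈ S.M (y n) ∩ S.DL) →
      S.WConvW y y₀ → S.WConvW x x₀ → x₀ ∈ S.M y₀ ∩ S.DL)
    (hMapprox : ∀ (y : ℕ → X) (y₀ : X), (∀ n, y n ∈ S.K) → S.WConvW y y₀ →
      ∀ x₀ ∈ S.M y₀ ∩ S.DL, ∃ x : ℕ → X,
        (∀ n, x n ∈ S.M (y n) ∩ S.DL) ∧ Tendsto x atTop (𝓝 x₀))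
    (hFbdd : ∀ B : Set X, IsBounded B → IsBounded (S.F '' B))
    (hFmono : ∀ u v : X, 0 ≤ (S.F u - S.F v) (u - v))
    (hFhemi : ∀ u v : X, Tendsto (fun t : ℝ => S.F (u + t • v) v) (𝓝[>] 0) (𝓝 (S.F u v)))
    (hGgraph : ∀ (z : ℕ → Y) (z₀ : Y) (ξ : ℕ → Y →L[ℝ] ℝ) (ξ₀ : Y →L[ℝ] ℝ),
      Tendsto z atTop (𝓝 z₀) → (∀ n, ξ n ∈ S.G (z n)) →
      WeakStarConv ξ ξ₀ → ξ₀ ∈ S.G z₀)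
    (hgam : S.Hgam)
    (hPsiconvex : ∀ x : X, ConvexOn ℝ univ (S.Psi x))
    (hPsibdd : ∀ A B C : Set X, IsBounded A → IsBounded B → IsBounded C →
      ∃ c, ∀ a ∈ A, ∀ u ∈ B, ∀ v ∈ C, S.Psi a u - S.Psi a v ≤ c)
    (hPsilimsup : ∀ (w x y : ℕ → X) (w₀ x₀ y₀ : X),
      S.WConvW w w₀ → S.WConvW x x₀ → Tendsto y atTop (𝓝 y₀) →
      limsup (fun n => S.Psi (w n) (y n) - S.Psi (w n) (x n)) atTop ≤
        S.Psi w₀ y₀ - S.Psi w₀ x₀)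
    {z x : ℕ → X} {ξ η : ℕ → Y →L[ℝ] ℝ} {z₀ x₀ : X} {ξ₀ η₀ : Y →L[ℝ] ℝ}
    (hzK : ∀ n, z n ∈ S.K) (hsol : ∀ n, x n ∈ S.Sol2 (z n) (ξ n))
    (hη : ∀ n, η n ∈ S.G (S.gam (z n))) (hz : S.WConvW z z₀) (hx : S.WConvW x x₀)
    (hξ : WeakStarConv ξ ξ₀) (hηlim : WeakStarConv η η₀) :
    x₀ ∈ S.Sol2 z₀ ξ₀ ∧ η₀ ∈ S.G (S.gam z₀) := by
  refine ⟨?_, hGgraph _ _ η η₀ (hgam z z₀ hz) hη hηlim⟩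
  have hz₀ : z₀ ∈ S.K := hz.1.mem_of_isClosed_of_convex hKclosed hKconvex hzK
  have hx₀ : x₀ ∈ S.M z₀ ∩ S.DL := hMgraph z x z₀ x₀ hzK (fun n => (hsol n).1) hz hx
  have hPsi : ConvexOn ℝ (S.M z₀ ∩ S.DL) (S.Psi z₀) :=
    (hPsiconvex z₀).subset (subset_univ _) ((hMconvex z₀ hz₀).inter hDL)
  refine QVISetting.mem_sol2_of_minty hPsi (hFhemi x₀) hx₀ fun y hy => ?_
  obtain ⟨w, hwM, hwy⟩ := hMapprox z z₀ hzK hz y hy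
  have hFx : IsBounded (range fun n => S.F (x n)) := by
    simpa only [← range_comp, Function.comp_def] using hFbdd _ hx.1.isBounded_range
  exact QVISetting.psi_sub_le_of_tendsto hPsibdd hPsilimsup hz hx hwy
    (hx.tendsto_minty_bound hgam hFx hwy hξ) fun n =>
      QVISetting.psi_sub_le_of_mem_sol2 (hsol n) (hwM n)
        (hLmono _ (hsol n).1.2 _ hx₀.2) (hFmono _ _)

/-- under the hypotheses of Statement 0 and strict monotonicity
of `F`, the graph of `Q(z, ξ) = {S(z, ξ)} × G(γ z)` is sequentially weakly
closed. -/
theorem statement6 {X Y : Type*} [NormedAddCommGroup X] [NormedSpace ℝ X]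
    [NormedAddCommGroup Y] [NormedSpace ℝ Y] [CompleteSpace X] [CompleteSpace Y]
    [TopologicalSpace.SeparableSpace X] [TopologicalSpace.SeparableSpace Y]
    (hreflX : IsReflexiveSpace X) (hreflY : IsReflexiveSpace Y)
    (S : QVISetting X Y)
    (hK : S.HK) (hL : S.HL) (hM : S.HM) (hF : S.HF) (hG : S.HG)
    (hgam : S.Hgam) (hPsi : S.HPsi)
    (hsmall : S.cG * ‖S.gam‖ ^ S.p < S.cF)
    (hstrict : S.StrictlyMonotoneF)
    (Ssol : X → (Y →L[ℝ] ℝ) → X)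
    (hSsol : ∀ z ∈ S.K, ∀ ξ : Y →L[ℝ] ℝ, S.Sol2 z ξ = {Ssol z ξ}) :
    ∀ (z x : ℕ → X) (ξ ηs : ℕ → Y →L[ℝ] ℝ) (z₀ x₀ : X) (ξ₀ η₀ : Y →L[ℝ] ℝ),
      (∀ n, z n ∈ S.K ∩ S.DL) → (∀ n, x n ∈ S.K ∩ S.DL) →
      (∀ n, x n = Ssol (z n) (ξ n)) → (∀ n, ηs n ∈ S.G (S.gam (z n))) →
      S.WConvW z z₀ → S.WConvW x x₀ →
      WeakStarConv ξ ξ₀ → WeakStarConv ηs η₀ →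
      x₀ ∈ S.Sol2 z₀ ξ₀ ∧ η₀ ∈ S.G (S.gam z₀) := by
  intro z x ξ ηs z₀ x₀ ξ₀ η₀ hz _ hxS hη hzc hxc hξ hηc
  have hsol (n : ℕ) : x n ∈ S.Sol2 (z n) (ξ n) := by
    rw [hSsol _ (hz n).1, hxS n]
    exact mem_singleton _
  exact statement6_general S hK.2.1 hK.2.2 hL.convex_domain hL.2.2.2.1
    (fun u hu => (hM.1 u hu).2.2.1) hM.2.2.1 hM.2.2.2 hF.1 hF.2.1
    (fun u v => (hF.2.2.1 u v v).mono_left nhdsWithin_le_nhds) hG.2.1 hgam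
    (fun u => (hPsi.1 u).1) (fun _ _ _ => hPsi.exists_psi_sub_le) hPsi.2.2.1
    (fun n => (hz n).1) hsol hη hzc hxc hξ hηc
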